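/- Let {θ_t} and {γ_t} be positive sequences, let w_1 ∈ Z, let {Δ^t} be an arbitrary sequence in E*, and define w_1^v = w_1 and w_{i+1}^v = argmin_{u∈Z} [−γ_i⟨Δ^i, u⟩ + V(w_i^v, u)] for i ≥ 1. Then for every t ≥ 1 and every u ∈ Z, Σ_{i=1}^t θ_i ⟨−Δ^i, w_i^v − u⟩ ≤ Σ_{i=1}^t (θ_i/γ_i)(V(w_i^v, u) − V(w_{i+1}^v, u)) + Σ_{i=1}^t (θ_i γ_i/(2μ)) ‖Δ^i‖_*². -/

import Mathlib

/-!
First-order optimality of the proximal step `p` from `x` along a functional `ℓ`, combined with the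
three-point identity for the Bregman divergence `V`, gives `ℓ (p - u) ≤ V x u - V p u - V x p`.
Young's inequality bounds the remaining term `ℓ (x - p)` by
`μ / 2 * ‖p - x‖ ^ 2 + ‖ℓ‖ ^ 2 / (2 * μ)`, whose first summand is at most `V x p`.
Take `ℓ = -γ Δ`, multiply by `θ / γ` and sum over the steps.
-/

theorem apply_le_norm_sq_add_opNorm_sq {E : Type*} [SeminormedAddCommGroup E] [NormedSpace ℝ E]
    (ℓ : E →L[ℝ] ℝ) {μ : ℝ} (hμ : 0 < μ) (v : E) :
    ℓ v ≤ μ / 2 * ‖v‖ ^ 2 + ‖ℓ‖ ^ 2 / (2 * μ) :=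
  calc
    ℓ v ≤ ‖ℓ‖ * ‖v‖ := (le_abs_self _).trans (ℓ.le_opNorm v)
    _ = (2 * ‖v‖ * ‖ℓ‖) / 2 := by ring
    _ ≤ (μ * ‖v‖ ^ 2 + μ⁻¹ * ‖ℓ‖ ^ 2) / 2 := by
      gcongr
      exact two_mul_le_add_mul_sq hμ
    _ = μ / 2 * ‖v‖ ^ 2 + ‖ℓ‖ ^ 2 / (2 * μ) := by field_simp

section BregmanDiv

variable {E : Type*} [AddCommGroup E] [Module ℝ E] [TopologicalSpace E]

/-- The Bregman divergence `V(z, u)` of `ω`. The gradient is passed as a separate field `Dω`,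
because a derivative of `ω` relative to its domain need not be unique. -/
def bregmanDiv (ω : E → ℝ) (Dω : E → E →L[ℝ] ℝ) (z u : E) : ℝ :=
  ω u - ω z - Dω z (u - z)

theorem bregmanDiv_three_point (ω : E → ℝ) (Dω : E → E →L[ℝ] ℝ) (x p u : E) :
    bregmanDiv ω Dω x u - bregmanDiv ω Dω x p - bregmanDiv ω Dω p u
      = (Dω p - Dω x) (u - p) := by
  simp only [bregmanDiv, sub_apply, map_sub]
  ring

end BregmanDiv

section ProximalStep

variable {E : Type*} [NormedAddCommGroup E] [NormedSpace ℝ E]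
  {Z : Set E} {ω : E → ℝ} {Dω : E → E →L[ℝ] ℝ}

theorem hasFDerivWithinAt_bregmanDiv_right {x p : E} (hω : HasFDerivWithinAt ω (Dω p) Z p) :
    HasFDerivWithinAt (bregmanDiv ω Dω x) (Dω p - Dω x) Z p := by
  have hexpand : bregmanDiv ω Dω x = fun u => ω u - ω x - (Dω x u - Dω x x) :=
    funext fun u => by rw [bregmanDiv, map_sub]
  rw [hexpand]
  exact (hω.sub_const _).sub ((Dω x).hasFDerivWithinAt.sub_const _)

theorem add_bregmanDiv_le_of_isMinOn (hZ : Convex ℝ Z) {x p u : E} (hp : p ∈ Z) (hu : u ∈ Z)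
    (hω : HasFDerivWithinAt ω (Dω p) Z p) {ℓ : E →L[ℝ] ℝ}
    (hmin : IsMinOn (fun v => ℓ v + bregmanDiv ω Dω x v) Z p) :
    ℓ p + bregmanDiv ω Dω x p + bregmanDiv ω Dω p u ≤ ℓ u + bregmanDiv ω Dω x u := by
  have hderiv : HasFDerivWithinAt (fun v => ℓ v + bregmanDiv ω Dω x v) (ℓ + (Dω p - Dω x)) Z p :=
    ℓ.hasFDerivWithinAt.fun_add (hasFDerivWithinAt_bregmanDiv_right hω)
  have hopt : 0 ≤ (ℓ + (Dω p - Dω x)) (u - p) :=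
    hmin.localize.hasFDerivWithinAt_nonneg hderiv
      (sub_mem_posTangentConeAt_of_segment_subset (hZ.segment_subset hp hu))
  rw [add_apply, ← bregmanDiv_three_point, map_sub] at hopt
  linarith

theorem apply_sub_le_of_isMinOn_add_bregmanDiv (hZ : Convex ℝ Z) {μ : ℝ} (hμ : 0 < μ)
    {x p u : E} (hp : p ∈ Z) (hu : u ∈ Z) (hω : HasFDerivWithinAt ω (Dω p) Z p)
    (hlb : μ / 2 * ‖p - x‖ ^ 2 ≤ bregmanDiv ω Dω x p) {ℓ : E →L[ℝ] ℝ}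
    (hmin : IsMinOn (fun v => ℓ v + bregmanDiv ω Dω x v) Z p) :
    ℓ (x - u) ≤ bregmanDiv ω Dω x u - bregmanDiv ω Dω p u + ‖ℓ‖ ^ 2 / (2 * μ) := by
  have hprox := add_bregmanDiv_le_of_isMinOn hZ hp hu hω hmin
  have hyoung := apply_le_norm_sq_add_opNorm_sq ℓ hμ (x - p)
  rw [norm_sub_rev, map_sub] at hyoung
  rw [map_sub]
  linarith

theorem mul_neg_apply_sub_le_of_isMinOn (hZ : Convex ℝ Z) {μ : ℝ} (hμ : 0 < μ)
    {x p u : E} (hp : p ∈ Z) (hu : u ∈ Z) (hω : HasFDerivWithinAt ω (Dω p) Z p)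
    (hlb : μ / 2 * ‖p - x‖ ^ 2 ≤ bregmanDiv ω Dω x p) {θ γ : ℝ} (hθ : 0 ≤ θ) (hγ : 0 < γ)
    {Δ : E →L[ℝ] ℝ} (hmin : IsMinOn (fun v => -(γ * Δ v) + bregmanDiv ω Dω x v) Z p) :
    θ * (-Δ (x - u)) ≤
      θ / γ * (bregmanDiv ω Dω x u - bregmanDiv ω Dω p u) + θ * γ / (2 * μ) * ‖Δ‖ ^ 2 := by
  have hstep : -(γ * Δ (x - u)) ≤
      bregmanDiv ω Dω x u - bregmanDiv ω Dω p u + ‖-(γ • Δ)‖ ^ 2 / (2 * μ) :=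
    apply_sub_le_of_isMinOn_add_bregmanDiv hZ hμ hp hu hω hlb (ℓ := -(γ • Δ)) hmin
  rw [norm_neg, norm_smul, Real.norm_of_nonneg hγ.le] at hstep
  calc
    θ * (-Δ (x - u)) = θ / γ * -(γ * Δ (x - u)) := by field_simp
    _ ≤ θ / γ * (bregmanDiv ω Dω x u - bregmanDiv ω Dω p u + (γ * ‖Δ‖) ^ 2 / (2 * μ)) := by gcongr
    _ = θ / γ * (bregmanDiv ω Dω x u - bregmanDiv ω Dω p u) + θ * γ / (2 * μ) * ‖Δ‖ ^ 2 := by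
      field_simp

theorem perturbation_sum_bound_general (hZ : Convex ℝ Z) {μ : ℝ} (hμ : 0 < μ)
    (hω : ∀ z ∈ Z, HasFDerivWithinAt ω (Dω z) Z z)
    (hlb : ∀ z ∈ Z, ∀ u ∈ Z, μ / 2 * ‖u - z‖ ^ 2 ≤ bregmanDiv ω Dω z u)
    {θ γ : ℕ → ℝ} (hθ : ∀ i ≥ 1, 0 ≤ θ i) (hγ : ∀ i ≥ 1, 0 < γ i) {Δ : ℕ → E →L[ℝ] ℝ}
    {w : ℕ → E} (hwZ : ∀ i ≥ 1, w i ∈ Z)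
    (hmin : ∀ i ≥ 1,
      IsMinOn (fun u => -(γ i * Δ i u) + bregmanDiv ω Dω (w i) u) Z (w (i + 1)))
    (t : ℕ) {u : E} (hu : u ∈ Z) :
    ∑ i ∈ Finset.Icc 1 t, θ i * (-Δ i (w i - u)) ≤
      (∑ i ∈ Finset.Icc 1 t,
        θ i / γ i * (bregmanDiv ω Dω (w i) u - bregmanDiv ω Dω (w (i + 1)) u))
        + ∑ i ∈ Finset.Icc 1 t, θ i * γ i / (2 * μ) * ‖Δ i‖ ^ 2 := by
  rw [← Finset.sum_add_distrib]
  refine Finset.sum_le_sum fun i hmem => ?_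
  have hi : 1 ≤ i := (Finset.mem_Icc.mp hmem).1
  have hnext : w (i + 1) ∈ Z := hwZ (i + 1) (Nat.le_add_left 1 i)
  exact mul_neg_apply_sub_le_of_isMinOn hZ hμ hnext hu (hω _ hnext) (hlb _ (hwZ i hi) _ hnext)
    (hθ i hi) (hγ i hi) (hmin i hi)

end ProximalStep

open Finset in
/-- technical bound on the weighted sum of perturbation terms. -/
theorem perturbation_sum_bound
    {E : Type*} [NormedAddCommGroup E] [NormedSpace ℝ E] [FiniteDimensional ℝ E]
    (Z : Set E) (hZne : Z.Nonempty) (hZcl : IsClosed Z) (hZcv : Convex ℝ Z)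
    (μ : ℝ) (hμ : 0 < μ)
    (ω : E → ℝ) (Dω : E → E →L[ℝ] ℝ)
    (hωdiff : ∀ z ∈ Z, HasFDerivWithinAt ω (Dω z) Z z)
    (hωcont : ContinuousOn Dω Z)
    (hωsc : StrongConvexOn Z μ ω)
    (V : E → E → ℝ) (hV : ∀ z u, V z u = ω u - ω z - Dω z (u - z))
    (hVlb : ∀ z ∈ Z, ∀ u ∈ Z, μ / 2 * ‖u - z‖ ^ 2 ≤ V z u)
    (θ γ : ℕ → ℝ) (hθpos : ∀ t ≥ 1, 0 < θ t) (hγpos : ∀ t ≥ 1, 0 < γ t)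
    (Δ : ℕ → E →L[ℝ] ℝ)
    (w1 : E) (hw1Z : w1 ∈ Z)
    (wv : ℕ → E) (hwv1 : wv 1 = w1)
    (hwvZ : ∀ i ≥ 1, wv i ∈ Z)
    (hwvrec : ∀ i ≥ 1, IsMinOn (fun u => -(γ i * (Δ i) u) + V (wv i) u) Z (wv (i+1))) :
    ∀ t ≥ 1, ∀ u ∈ Z,
      ∑ i ∈ Finset.Icc 1 t, θ i * (-(Δ i) (wv i - u)) ≤
        (∑ i ∈ Finset.Icc 1 t, θ i / γ i * (V (wv i) u - V (wv (i+1)) u))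
          + ∑ i ∈ Finset.Icc 1 t, θ i * γ i / (2 * μ) * ‖Δ i‖ ^ 2 := by
  obtain rfl : V = bregmanDiv ω Dω := funext₂ hV
  exact fun t _ u hu => perturbation_sum_bound_general hZcv hμ hωdiff hVlb
    (fun i hi => (hθpos i hi).le) hγpos hwvZ hwvrec t hu
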